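/- Let G be a connected weighted graph on a finite vertex set V with positive edge susceptances and weighted Laplacian L, and fix a reference vertex r, so shift factors Ψ_{ℓ,v} are well defined. Let C ⊆ V be a vertex cut set, let B be a nonempty union of the vertex sets of some (but not all) connected components of G − C, and A = V ∖ (B ∪ C), so that no edge of G joins A and B; let {n_1, …, n_M} be the vertices of C adjacent in G to at least one vertex of B. Suppose all congested lines are contained in the i-th sub-graph: the shadow prices μ_ℓ are real numbers that vanish on every edge ℓ having an endpoint in B, and the locational marginal price at bus v is λ_v = λ_r − Σ_ℓ μ_ℓ Ψ_{ℓ,v}, where λ_r is the LMP at the reference bus. Then for every p ∈ B, min{λ_{n_1}, …, λ_{n_M}} ≤ λ_p ≤ max{λ_{n_1}, …, λ_{n_M}}; consequently a pair of buses of B ∪ {n_1,…,n_M} with maximum LMP difference can be chosen among {n_1, …, n_M}, i.e., max over u, v ∈ B ∪ {n_1,…,n_M} of |λ_u − λ_v| equals max over u, v ∈ {n_1,…,n_M} of |λ_u − λ_v|. -/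

import Mathlib

open Matrix

/-- The weighted Laplacian of a graph on the finite vertex set `V` whose edges are
the pairs `{u,v}` with `w u v > 0`, carrying susceptance `w u v`. -/
def weightedLaplacian {V : Type*} [Fintype V] [DecidableEq V] (w : V → V → ℝ) :
    Matrix V V ℝ :=
  Matrix.of fun u v => if u = v then ∑ x, w u x else -(w u v)

theorem weightedLaplacian_transpose {V : Type*} [Fintype V] [DecidableEq V] {w : V → V → ℝ}
    (hsym : ∀ u v, w u v = w v u) : (weightedLaplacian w)ᵀ = weightedLaplacian w := by
  ext u v
  rcases eq_or_ne u v with rfl | h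
  · rfl
  · simp [weightedLaplacian, h, h.symm, hsym v u]

theorem weightedLaplacian_mulVec_apply {V : Type*} [Fintype V] [DecidableEq V] {w : V → V → ℝ}
    (hdiag : ∀ v, w v v = 0) (f : V → ℝ) (u : V) :
    (weightedLaplacian w *ᵥ f) u = ∑ x, w u x * (f u - f x) := by
  have h : ∀ x, weightedLaplacian w u x * f x
      = (if u = x then (∑ y, w u y) * f x else 0) - w u x * f x := by
    intro x
    rcases eq_or_ne u x with rfl | h
    · simp [weightedLaplacian, hdiag]
    · simp [weightedLaplacian, h]
  simp only [mulVec, dotProduct, h, mul_sub, Finset.sum_sub_distrib, Finset.sum_ite_eq,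
    Finset.mem_univ, if_true, Finset.sum_mul]

/-- The nodal angles form a symmetric kernel (reciprocity). -/
theorem nodalAngle_symm {V : Type*} [Fintype V] [DecidableEq V] {w : V → V → ℝ}
    (hsym : ∀ u v, w u v = w v u) {r : V} {Θ : V → V → ℝ} (hΘr : ∀ v, Θ v r = 0)
    (hΘ : ∀ v, weightedLaplacian w *ᵥ Θ v = Pi.single v 1 - Pi.single r 1) (u v : V) :
    Θ u v = Θ v u := by
  have key : ∀ a b, Θ a ⬝ᵥ weightedLaplacian w *ᵥ Θ b = Θ a b := by
    intro a b
    simp [hΘ, dotProduct_sub, hΘr]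
  rw [← key u v, dotProduct_mulVec, ← mulVec_transpose, weightedLaplacian_transpose hsym,
    dotProduct_comm, key]

/-- Maximum principle: a function that is harmonic on a proper subset `B` of a connected
weighted graph is bounded above on `B` by its values on the outer boundary of `B`. -/
theorem exists_boundary_le_of_harmonicOn {V : Type*} [Fintype V] {w : V → V → ℝ}
    (hsym : ∀ u v, w u v = w v u) (hnonneg : ∀ u v, 0 ≤ w u v)
    (hconn : (SimpleGraph.fromRel fun u v => 0 < w u v).Connected)
    {B : Finset V} {a : V} (ha : a ∉ B) {f : V → ℝ}
    (hf : ∀ b ∈ B, ∑ x, w b x * (f b - f x) = 0) {p : V} (hp : p ∈ B) :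
    ∃ n ∉ B, (∃ b ∈ B, 0 < w n b) ∧ f p ≤ f n := by
  by_contra! hlt
  obtain ⟨m, hm, hmax⟩ := B.exists_max_image f ⟨p, hp⟩
  have hstep : ∀ b ∈ B, f b = f m → ∀ x, 0 < w b x → x ∈ B ∧ f x = f m := by
    intro b hb hbm x hx
    have hterm : ∀ y ∈ Finset.univ, 0 ≤ w b y * (f b - f y) := by
      intro y _
      rcases (hnonneg b y).eq_or_lt with h0 | hpos
      · simp [← h0]
      · refine mul_nonneg hpos.le (sub_nonneg.2 ?_)
        rw [hbm]
        by_cases hy : y ∈ B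
        · exact hmax y hy
        · exact ((hlt y hy ⟨b, hb, hsym b y ▸ hpos⟩).trans_le (hmax p hp)).le
    have hzero := (Finset.sum_eq_zero_iff_of_nonneg hterm).1 (hf b hb) x (Finset.mem_univ x)
    have hfx : f x = f m := by
      rcases mul_eq_zero.1 hzero with h | h
      · exact absurd h hx.ne'
      · linarith
    refine ⟨?_, hfx⟩
    by_contra hxB
    have := hlt x hxB ⟨b, hb, hsym b x ▸ hx⟩
    have := hmax p hp
    linarith
  have hwalk : ∀ {u v : V}, (SimpleGraph.fromRel fun u v => 0 < w u v).Walk u v →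
      u ∈ B → f u = f m → v ∈ B := by
    intro u v q
    induction q with
    | nil => exact fun h _ => h
    | cons h _ ih =>
      intro hu hum
      have hpos := ((SimpleGraph.fromRel_adj _ _ _).1 h).2.elim id fun h' => hsym _ _ ▸ h'
      obtain ⟨h1, h2⟩ := hstep _ hu hum _ hpos
      exact ih h1 h2
  obtain ⟨q⟩ := hconn.preconnected m a
  exact ha (hwalk q hm rfl)

/-- Locational marginal prices are harmonic at every bus that meets no congested line. -/
theorem lmp_harmonic_of_uncongested {V : Type*} [Fintype V] [DecidableEq V] {w : V → V → ℝ}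
    (hsym : ∀ u v, w u v = w v u) (hdiag : ∀ v, w v v = 0)
    {r : V} {Θ : V → V → ℝ} (hΘr : ∀ v, Θ v r = 0)
    (hΘ : ∀ v, weightedLaplacian w *ᵥ Θ v = Pi.single v 1 - Pi.single r 1)
    {Ψ : V × V → V → ℝ} (hΨ : ∀ ℓ v, Ψ ℓ v = w ℓ.1 ℓ.2 * (Θ v ℓ.2 - Θ v ℓ.1))
    {S : Finset (V × V)} {μ : V × V → ℝ} {lr : ℝ} {lmp : V → ℝ}
    (hlmp : ∀ v, lmp v = lr - ∑ ℓ ∈ S, μ ℓ * Ψ ℓ v)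
    {b : V} (hμ : ∀ ℓ : V × V, ℓ.1 = b ∨ ℓ.2 = b → μ ℓ = 0) :
    ∑ x, w b x * (lmp b - lmp x) = 0 := by
  have hcol : ∀ c, ∑ x, w b x * (Θ b c - Θ x c)
      = (Pi.single c 1 - Pi.single r 1 : V → ℝ) b := by
    intro c
    rw [← hΘ, weightedLaplacian_mulVec_apply hdiag]
    simp only [nodalAngle_symm hsym hΘr hΘ c]
  have hline : ∀ ℓ : V × V, μ ℓ * ∑ x, w b x * (Ψ ℓ x - Ψ ℓ b) = 0 := by
    intro ℓ
    by_cases hℓ : ℓ.1 = b ∨ ℓ.2 = b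
    · simp [hμ ℓ hℓ]
    · push Not at hℓ
      have : ∑ x, w b x * (Ψ ℓ x - Ψ ℓ b) = w ℓ.1 ℓ.2 *
          (∑ x, w b x * (Θ b ℓ.1 - Θ x ℓ.1) - ∑ x, w b x * (Θ b ℓ.2 - Θ x ℓ.2)) := by
        rw [← Finset.sum_sub_distrib, Finset.mul_sum]
        refine Finset.sum_congr rfl fun x _ => ?_
        rw [hΨ, hΨ]
        ring
      rw [this, hcol, hcol]
      simp [Pi.single_apply, hℓ.1.symm, hℓ.2.symm]
  calc ∑ x, w b x * (lmp b - lmp x)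
      = ∑ x, ∑ ℓ ∈ S, μ ℓ * (w b x * (Ψ ℓ x - Ψ ℓ b)) := by
        refine Finset.sum_congr rfl fun x _ => ?_
        rw [hlmp, hlmp, sub_sub_sub_cancel_left, ← Finset.sum_sub_distrib, Finset.mul_sum]
        exact Finset.sum_congr rfl fun ℓ _ => by ring
    _ = ∑ ℓ ∈ S, μ ℓ * ∑ x, w b x * (Ψ ℓ x - Ψ ℓ b) := by
        rw [Finset.sum_comm]
        simp only [Finset.mul_sum]
    _ = 0 := Finset.sum_eq_zero fun ℓ _ => hline ℓ

/-- Corollary 2.  Decompose the connected grid by a vertex cut set `C`: `B` is a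
nonempty union of some (but not all) of the connected components of `G − C`,
`A = V ∖ (B ∪ C)` is nonempty, and no edge joins `A` and `B`; `N` is the set of cut
vertices adjacent to `B`.  If all congested lines lie outside `B` (the shadow
prices `μ` vanish on every line with an endpoint in `B`) and the LMPs are
`λ v = λr − ∑_ℓ μ ℓ * Ψ ℓ v`, then the LMP of every bus of `B` lies between the
minimum and the maximum of the LMPs of the buses of `N`; consequently a pair of
buses of `B ∪ N` with maximum LMP difference can be chosen inside `N`. -/
theorem lmp_extremes_in_vertex_cut_set {V : Type*} [Fintype V] [DecidableEq V]
    (w : V → V → ℝ)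
    (hsym : ∀ u v, w u v = w v u)
    (hdiag : ∀ v, w v v = 0)
    (hnonneg : ∀ u v, 0 ≤ w u v)
    (hconn : (SimpleGraph.fromRel fun u v => 0 < w u v).Connected)
    -- the reference bus and the nodal angles defining the shift factors
    (r : V) (Θ : V → V → ℝ)
    (hΘr : ∀ v, Θ v r = 0)
    (hΘ : ∀ v, weightedLaplacian w *ᵥ Θ v = Pi.single v 1 - Pi.single r 1)
    -- the injection shift factors of the oriented lines
    (Ψ : V × V → V → ℝ)
    (hΨ : ∀ ℓ v, Ψ ℓ v = w ℓ.1 ℓ.2 * (Θ v ℓ.2 - Θ v ℓ.1))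
    -- the vertex cut set `C` and the decomposition `V = A ∪ C ∪ B`
    (C B : Finset V) (hCB : Disjoint C B) (hB : B.Nonempty)
    (A : Finset V) (hA : A = (C ∪ B)ᶜ) (hAne : A.Nonempty)
    (hsep : ∀ a ∈ A, ∀ b ∈ B, w a b = 0)
    -- the cut vertices adjacent to `B`
    (N : Finset V) (hN : N = C.filter fun n => ∃ b ∈ B, 0 < w n b)
    -- shadow prices, vanishing on every line with an endpoint in `B`
    (μ : V × V → ℝ)
    (hμ : ∀ ℓ : V × V, ℓ.1 ∈ B ∨ ℓ.2 ∈ B → μ ℓ = 0)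
    -- the locational marginal prices
    (lr : ℝ) (lmp : V → ℝ)
    (hlmp : ∀ v, lmp v =
      lr - ∑ ℓ ∈ Finset.univ.filter (fun ℓ : V × V => 0 < w ℓ.1 ℓ.2), μ ℓ * Ψ ℓ v) :
    (∀ p ∈ B, (∃ n1 ∈ N, lmp n1 ≤ lmp p) ∧ (∃ n2 ∈ N, lmp p ≤ lmp n2)) ∧
    (∃ u ∈ N, ∃ v ∈ N, ∀ x ∈ B ∪ N, ∀ y ∈ B ∪ N, |lmp x - lmp y| ≤ |lmp u - lmp v|) := by
  obtain ⟨a, ha⟩ := hAne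
  have haB : a ∉ B := by
    rw [hA] at ha
    simp only [Finset.mem_compl, Finset.mem_union, not_or] at ha
    exact ha.2
  have hharm : ∀ b ∈ B, ∑ x, w b x * (lmp b - lmp x) = 0 := fun b hb =>
    lmp_harmonic_of_uncongested hsym hdiag hΘr hΘ hΨ hlmp fun ℓ hℓ =>
      hμ ℓ (by rcases hℓ with rfl | rfl <;> simp [hb])
  have hharm_neg : ∀ b ∈ B, ∑ x, w b x * ((-lmp) b - (-lmp) x) = 0 := by
    intro b hb
    rw [← neg_zero, ← hharm b hb, ← Finset.sum_neg_distrib]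
    exact Finset.sum_congr rfl fun x _ => by simp only [Pi.neg_apply]; ring
  have hmemN : ∀ n ∉ B, (∃ b ∈ B, 0 < w n b) → n ∈ N := by
    rintro n hnB ⟨b, hb, hpos⟩
    rw [hN, Finset.mem_filter]
    refine ⟨?_, b, hb, hpos⟩
    by_contra hnC
    exact hpos.ne' (hsep n (by simp [hA, hnC, hnB]) b hb)
  have hbounds : ∀ p ∈ B, (∃ n1 ∈ N, lmp n1 ≤ lmp p) ∧ (∃ n2 ∈ N, lmp p ≤ lmp n2) := by
    intro p hp
    obtain ⟨n1, hn1, hadj1, hle1⟩ :=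
      exists_boundary_le_of_harmonicOn hsym hnonneg hconn haB hharm_neg hp
    obtain ⟨n2, hn2, hadj2, hle2⟩ :=
      exists_boundary_le_of_harmonicOn hsym hnonneg hconn haB hharm hp
    exact ⟨⟨n1, hmemN n1 hn1 hadj1, neg_le_neg_iff.1 hle1⟩, n2, hmemN n2 hn2 hadj2, hle2⟩
  refine ⟨hbounds, ?_⟩
  obtain ⟨p, hp⟩ := hB
  obtain ⟨n, hn, -⟩ := (hbounds p hp).1
  obtain ⟨u, hu, hmax⟩ := N.exists_max_image lmp ⟨n, hn⟩
  obtain ⟨v, hv, hmin⟩ := N.exists_min_image lmp ⟨n, hn⟩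
  have hrange : ∀ x ∈ B ∪ N, lmp v ≤ lmp x ∧ lmp x ≤ lmp u := by
    intro x hx
    rcases Finset.mem_union.1 hx with hx | hx
    · obtain ⟨⟨n1, hn1, h1⟩, n2, hn2, h2⟩ := hbounds x hx
      exact ⟨(hmin n1 hn1).trans h1, h2.trans (hmax n2 hn2)⟩
    · exact ⟨hmin x hx, hmax x hx⟩
  refine ⟨u, hu, v, hv, fun x hx y hy => le_trans (abs_le.2 ⟨?_, ?_⟩) (le_abs_self _)⟩ <;>
    linarith [hrange x hx, hrange y hy]
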